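/- (Operator Diaz–Metcalf type inequality.) Let Φ be a positive linear map from n×n to m×m complex matrices, let f : ℝ → ℝ be operator monotone on [0,∞), and let A, B be positive definite n×n complex matrices with s·A ≤ B ≤ t·A for some scalars 0 < s ≤ t with √(st) ≥ 1. Then (Φ(f(√(st)·A)) + Φ(f(B)))/2 ≤ ((√s+√t)/2)²·Φ(f(A ! B)). -/

import Mathlib

open Matrix ComplexOrder

/-- Loewner order: `A ≤ B` iff `B - A` is positive semidefinite. -/
def LoewnerLE {n : Type} [Fintype n] (A B : Matrix n n ℂ) : Prop := (B - A).PosSemidef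

/-- The positive square root of a (Hermitian) matrix, via the continuous functional calculus. -/
noncomputable def msqrt {n : Type} [Fintype n] [DecidableEq n] (A : Matrix n n ℂ) :
    Matrix n n ℂ := cfc Real.sqrt A

/-- The arithmetic mean `A ∇ B = (A + B)/2`. -/
noncomputable def amean {n : Type} [Fintype n] [DecidableEq n] (A B : Matrix n n ℂ) :
    Matrix n n ℂ := (2 : ℝ)⁻¹ • (A + B)

/-- The harmonic mean `A ! B = ((A⁻¹ + B⁻¹)/2)⁻¹`. -/
noncomputable def hmean {n : Type} [Fintype n] [DecidableEq n] (A B : Matrix n n ℂ) :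
    Matrix n n ℂ := ((2 : ℝ)⁻¹ • (A⁻¹ + B⁻¹))⁻¹

/-- The geometric mean `A ♯ B = A^(1/2) (A^(-1/2) B A^(-1/2))^(1/2) A^(1/2)`. -/
noncomputable def gmean {n : Type} [Fintype n] [DecidableEq n] (A B : Matrix n n ℂ) :
    Matrix n n ℂ := msqrt A * msqrt ((msqrt A)⁻¹ * B * (msqrt A)⁻¹) * msqrt A

/-- `f : ℝ → ℝ` is operator monotone on `[0,∞)`: it is continuous and nonnegative on `[0,∞)`
and monotone on positive-semidefinite complex matrices of every finite size, with `f` applied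
via the continuous functional calculus. -/
def OpMonotone (f : ℝ → ℝ) : Prop :=
  ContinuousOn f (Set.Ici 0) ∧ (∀ x : ℝ, 0 ≤ x → 0 ≤ f x) ∧
    ∀ (k : Type) [Fintype k] [DecidableEq k] (X Y : Matrix k k ℂ),
      X.PosSemidef → LoewnerLE X Y → LoewnerLE (cfc f X) (cfc f Y)

/-- `g : ℝ → ℝ` is operator monotone decreasing on `(0,∞)`: it is continuous and nonnegative on
`(0,∞)` and antitone on positive-definite complex matrices of every finite size, with `g` applied
via the continuous functional calculus. -/
def OpAntitone (g : ℝ → ℝ) : Prop :=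
  ContinuousOn g (Set.Ioi 0) ∧ (∀ x : ℝ, 0 < x → 0 ≤ g x) ∧
    ∀ (k : Type) [Fintype k] [DecidableEq k] (X Y : Matrix k k ℂ),
      X.PosDef → Y.PosDef → LoewnerLE X Y → LoewnerLE (cfc g Y) (cfc g X)

/- For an isometry `V` with range projection `P = V Vᴴ`, a positive `X` lies below
`(1 + ε) P X P + (1 + ε⁻¹) (1 - P) X (1 - P)`, which `V` intertwines with `(1 + ε) Vᴴ X V`. Operator
monotonicity and `ε → 0` therefore give Jensen's inequality `Vᴴ f(X) V ≤ f(Vᴴ X V)`, so `f` is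
operator concave and `f(r A) ≤ r f(A)` for `r ≥ 1`. It remains to compare `√(st) A ∇ B` with
`((√s + √t) / 2)² (A ! B)`. A congruence taking `A` to `1` turns this into
`(√(st) + x) (1 + x) ≤ (√s + √t)² x` on `[s, t]`, that is,
`0 ≤ (x - s) (t - x) + (√(st) - 1) (√(st) + x)`, and this is where `√(st) ≥ 1` enters. -/

section Loewner

open scoped MatrixOrder

section Intertwining

variable {k l : Type*} [Fintype k] [DecidableEq k] [Fintype l] [DecidableEq l]

lemma pow_mul_eq_mul_pow_of_mul_eq_mul {R : Type*} [Semiring R] {X : Matrix l l R}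
    {A : Matrix k k R} {V : Matrix l k R} (h : X * V = V * A) (i : ℕ) :
    X ^ i * V = V * A ^ i := by
  induction i with
  | zero => simp
  | succ i ih =>
    rw [pow_succ, Matrix.mul_assoc, h, ← Matrix.mul_assoc, ih, Matrix.mul_assoc, ← pow_succ]

lemma aeval_mul_eq_mul_aeval_of_mul_eq_mul {R S : Type*} [CommSemiring R] [CommSemiring S]
    [Algebra R S] {X : Matrix l l S} {A : Matrix k k S} {V : Matrix l k S} (h : X * V = V * A)
    (p : Polynomial R) : Polynomial.aeval X p * V = V * Polynomial.aeval A p := by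
  simp only [Polynomial.aeval_eq_sum_range, Matrix.sum_mul, Matrix.mul_sum, Matrix.smul_mul,
    Matrix.mul_smul, pow_mul_eq_mul_pow_of_mul_eq_mul h]

variable {𝕜 : Type*} [RCLike 𝕜]

lemma cfc_mul_eq_mul_cfc_of_mul_eq_mul {X : Matrix l l 𝕜} {A : Matrix k k 𝕜} {V : Matrix l k 𝕜}
    (hX : X.IsHermitian) (hA : A.IsHermitian) (h : X * V = V * A) (f : ℝ → ℝ) :
    cfc f X * V = V * cfc f A := by
  have : Finite ↥(spectrum ℝ X ∪ spectrum ℝ A) :=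
    (X.finite_real_spectrum.union A.finite_real_spectrum).to_subtype
  obtain ⟨p, hp⟩ := (Polynomial.exists_eval_eq_iff
    (Subtype.val : ↥(spectrum ℝ X ∪ spectrum ℝ A) → ℝ) (fun x ↦ f x)).2
    fun _ _ hxy ↦ congrArg f hxy
  have cfc_X : cfc f X = Polynomial.aeval X p := by
    rw [← cfc_polynomial p X hX.isSelfAdjoint]
    exact cfc_congr fun x hx ↦ (hp ⟨x, .inl hx⟩).symm
  have cfc_A : cfc f A = Polynomial.aeval A p := by
    rw [← cfc_polynomial p A hA.isSelfAdjoint]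
    exact cfc_congr fun x hx ↦ (hp ⟨x, .inr hx⟩).symm
  rw [cfc_X, cfc_A, aeval_mul_eq_mul_aeval_of_mul_eq_mul h]

lemma cfc_fromBlocks_zero_zero {A : Matrix k k 𝕜} {B : Matrix l l 𝕜} (hA : A.IsHermitian)
    (hB : B.IsHermitian) (f : ℝ → ℝ) :
    cfc f (fromBlocks A 0 0 B) = fromBlocks (cfc f A) 0 0 (cfc f B) := by
  have hX : (fromBlocks A 0 0 B).IsHermitian := hA.fromBlocks conjTranspose_zero hB
  let E₁ : Matrix (k ⊕ l) k 𝕜 := fromRows 1 0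
  let E₂ : Matrix (k ⊕ l) l 𝕜 := fromRows 0 1
  have left_columns : cfc f (fromBlocks A 0 0 B) * E₁ = E₁ * cfc f A :=
    cfc_mul_eq_mul_cfc_of_mul_eq_mul hX hA
      (by simp [E₁, fromBlocks_mul_fromRows, fromRows_mul]) f
  have right_columns : cfc f (fromBlocks A 0 0 B) * E₂ = E₂ * cfc f B :=
    cfc_mul_eq_mul_cfc_of_mul_eq_mul hX hB
      (by simp [E₂, fromBlocks_mul_fromRows, fromRows_mul]) f
  calc cfc f (fromBlocks A 0 0 B)
      = cfc f (fromBlocks A 0 0 B) * fromCols E₁ E₂ := by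
        rw [fromCols_fromRows_eq_fromBlocks, fromBlocks_one, Matrix.mul_one]
    _ = fromCols (E₁ * cfc f A) (E₂ * cfc f B) := by
        rw [mul_fromCols, left_columns, right_columns]
    _ = fromBlocks (cfc f A) 0 0 (cfc f B) := by
        simp only [E₁, E₂, fromRows_mul, Matrix.one_mul, Matrix.zero_mul,
          fromCols_fromRows_eq_fromBlocks]

end Intertwining

lemma fromBlocks_zero_zero_nonneg {k l 𝕜 : Type*} [Finite k] [Finite l] [RCLike 𝕜]
    {A : Matrix k k 𝕜} {B : Matrix l l 𝕜} (hA : 0 ≤ A) (hB : 0 ≤ B) :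
    0 ≤ fromBlocks A 0 0 B := by
  classical
  have := Fintype.ofFinite k
  have := Fintype.ofFinite l
  obtain ⟨S, rfl⟩ := CStarAlgebra.nonneg_iff_eq_star_mul_self.1 hA
  obtain ⟨T, rfl⟩ := CStarAlgebra.nonneg_iff_eq_star_mul_self.1 hB
  have := star_mul_self_nonneg (fromBlocks S 0 0 T)
  simpa [star_eq_conjTranspose, fromBlocks_conjTranspose, fromBlocks_multiply] using this

lemma continuousOn_cfc_Ici {𝒜 : Type*} [CStarAlgebra 𝒜] [PartialOrder 𝒜] [StarOrderedRing 𝒜]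
    {f : ℝ → ℝ} (hf : ContinuousOn f (Set.Ici 0)) :
    ContinuousOn (cfc f : 𝒜 → 𝒜) (Set.Ici 0) := by
  cases subsingleton_or_nontrivial 𝒜
  · exact continuous_of_const (fun _ _ ↦ Subsingleton.elim _ _) |>.continuousOn
  refine ContinuousOn.cfc (s := fun a ↦ Set.Icc 0 (‖a‖ + 1)) f (fun _ _ ↦ isCompact_Icc)
    continuousOn_id (fun a _ ↦ ?_) (fun a ha ↦ IsSelfAdjoint.of_nonneg ha)
    (fun _ _ ↦ hf.mono Set.Icc_subset_Ici_self)
  have norm_lt : ∀ᶠ b in nhdsWithin a (Set.Ici 0), ‖b‖ < ‖a‖ + 1 :=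
    continuous_norm.continuousWithinAt.eventually_lt_const (lt_add_one _)
  filter_upwards [norm_lt, self_mem_nhdsWithin] with b hba hb x hx
  exact ⟨spectrum_nonneg_of_nonneg hb hx,
    (Real.le_norm_self x).trans ((spectrum.norm_le_norm_of_mem hx).trans hba.le)⟩

-- Expand `0 ≤ ε⁻¹ • (ε P - (1 - P)) X (ε P - (1 - P))`.
lemma le_smul_conjugate_add_smul_conjugate_one_sub {R : Type*} [Ring R] [StarRing R]
    [PartialOrder R] [StarOrderedRing R] [Algebra ℝ R] [StarModule ℝ R] [PosSMulMono ℝ R]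
    {X P : R} (hX : 0 ≤ X) (hP : IsSelfAdjoint P) {ε : ℝ} (hε : 0 < ε) :
    X ≤ (1 + ε) • (P * X * P) + (1 + ε⁻¹) • ((1 - P) * X * (1 - P)) := by
  have hS : IsSelfAdjoint (ε • P - (1 - P)) :=
    ((IsSelfAdjoint.all ε).smul hP).sub ((IsSelfAdjoint.one R).sub hP)
  have cross_terms : 0 ≤ ε⁻¹ • ((ε • P - (1 - P)) * X * (ε • P - (1 - P))) :=
    smul_nonneg (inv_nonneg.2 hε.le) (hS.conjugate_nonneg hX)
  rw [← sub_nonneg]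
  convert cross_terms using 1
  simp only [sub_mul, mul_sub, smul_mul_assoc, mul_smul_comm, one_mul, mul_one, smul_sub]
  match_scalars <;> field_simp <;> ring

namespace OpMonotone

variable {k l : Type} [Fintype k] [DecidableEq k] [Fintype l] [DecidableEq l] {f : ℝ → ℝ}

lemma cfc_le_cfc (hf : OpMonotone f) {X Y : Matrix k k ℂ} (hX : 0 ≤ X) (hXY : X ≤ Y) :
    cfc f X ≤ cfc f Y :=
  hf.2.2 k X Y hX.posSemidef hXY

lemma conjTranspose_mul_cfc_mul_le_cfc_smul (hf : OpMonotone f) {X : Matrix l l ℂ} (hX : 0 ≤ X)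
    {V : Matrix l k ℂ} (hV : Vᴴ * V = 1) {ε : ℝ} (hε : 0 < ε) :
    Vᴴ * cfc f X * V ≤ cfc f ((1 + ε) • (Vᴴ * X * V)) := by
  set P : Matrix l l ℂ := V * Vᴴ with hP
  set Z : Matrix l l ℂ := (1 + ε) • (P * X * P) + (1 + ε⁻¹) • ((1 - P) * X * (1 - P)) with hZ
  have P_sa : IsSelfAdjoint P := isHermitian_mul_conjTranspose_self V
  have PV : P * V = V := by rw [hP, Matrix.mul_assoc, hV, Matrix.mul_one]
  have X_le_Z : X ≤ Z := le_smul_conjugate_add_smul_conjugate_one_sub hX P_sa hε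
  have Z_herm : Z.IsHermitian := (hX.trans X_le_Z).posSemidef.isHermitian
  have W_herm : ((1 + ε) • (Vᴴ * X * V)).IsHermitian :=
    (isHermitian_conjTranspose_mul_mul V hX.posSemidef.isHermitian).smul (IsSelfAdjoint.all _)
  have ZV : Z * V = V * ((1 + ε) • (Vᴴ * X * V)) := by
    have compl_mul : (1 - P) * X * (1 - P) * V = 0 := by
      rw [Matrix.mul_assoc, Matrix.sub_mul 1 P V, PV, Matrix.one_mul, sub_self, Matrix.mul_zero]
    rw [hZ, Matrix.add_mul, Matrix.smul_mul, Matrix.smul_mul, compl_mul, smul_zero, add_zero,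
      Matrix.mul_assoc, PV, Matrix.mul_smul, hP]
    simp only [Matrix.mul_assoc]
  calc Vᴴ * cfc f X * V
      ≤ Vᴴ * cfc f Z * V := by
        have := (Matrix.le_iff.1 (hf.cfc_le_cfc hX X_le_Z)).conjTranspose_mul_mul_same V
        rwa [Matrix.mul_sub, Matrix.sub_mul] at this
    _ = cfc f ((1 + ε) • (Vᴴ * X * V)) := by
        rw [Matrix.mul_assoc, cfc_mul_eq_mul_cfc_of_mul_eq_mul Z_herm W_herm ZV,
          ← Matrix.mul_assoc, hV, Matrix.one_mul]

open scoped Matrix.Norms.L2Operator in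
lemma conjTranspose_mul_cfc_mul_le (hf : OpMonotone f) {X : Matrix l l ℂ} (hX : 0 ≤ X)
    {V : Matrix l k ℂ} (hV : Vᴴ * V = 1) : Vᴴ * cfc f X * V ≤ cfc f (Vᴴ * X * V) := by
  have hY : 0 ≤ Vᴴ * X * V := (hX.posSemidef.conjTranspose_mul_mul_same V).nonneg
  have smul_cont : ContinuousOn (fun ε : ℝ ↦ cfc f ((1 + ε) • (Vᴴ * X * V))) (Set.Ici 0) :=
    (continuousOn_cfc_Ici hf.1).comp (by fun_prop)
      fun ε hε ↦ smul_nonneg (add_nonneg zero_le_one hε) hY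
  have lim := (smul_cont 0 Set.self_mem_Ici).tendsto.mono_left
    (nhdsWithin_mono 0 Set.Ioi_subset_Ici_self)
  rw [add_zero, one_smul] at lim
  exact ge_of_tendsto lim (eventually_nhdsWithin_of_forall fun ε hε ↦
    hf.conjTranspose_mul_cfc_mul_le_cfc_smul hX hV hε)

lemma concaveOn_cfc (hf : OpMonotone f) :
    ConcaveOn ℝ (Set.Ici 0) (cfc f : Matrix k k ℂ → Matrix k k ℂ) := by
  refine ⟨convex_Ici 0, fun A hA B hB a b ha hb hab ↦ ?_⟩
  have hA : 0 ≤ A := hA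
  have hB : 0 ≤ B := hB
  set V : Matrix (k ⊕ k) k ℂ := fromRows (√a • 1) (√b • 1) with hV
  have compress (C D : Matrix k k ℂ) : Vᴴ * fromBlocks C 0 0 D * V = a • C + b • D := by
    simp [hV, Matrix.mul_assoc, fromBlocks_mul_fromRows,
      conjTranspose_fromRows_eq_fromCols_conjTranspose, fromCols_mul_fromRows, smul_smul,
      Real.mul_self_sqrt ha, Real.mul_self_sqrt hb]
  have V_isometry : Vᴴ * V = 1 := by
    have := compress 1 1
    rwa [fromBlocks_one, Matrix.mul_one, ← add_smul, hab, one_smul] at this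
  have jensen :=
    hf.conjTranspose_mul_cfc_mul_le (fromBlocks_zero_zero_nonneg hA hB) V_isometry
  rwa [cfc_fromBlocks_zero_zero hA.posSemidef.isHermitian hB.posSemidef.isHermitian, compress,
    compress] at jensen

lemma amean_cfc_le_cfc_amean (hf : OpMonotone f) {A B : Matrix k k ℂ} (hA : 0 ≤ A) (hB : 0 ≤ B) :
    amean (cfc f A) (cfc f B) ≤ cfc f (amean A B) := by
  have := hf.concaveOn_cfc.2 hA hB (by norm_num : (0 : ℝ) ≤ 2⁻¹)
    (by norm_num : (0 : ℝ) ≤ 2⁻¹) (by norm_num)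
  simpa only [amean, smul_add] using this

lemma cfc_smul_le_smul_cfc (hf : OpMonotone f) {A : Matrix k k ℂ} (hA : 0 ≤ A) {r : ℝ}
    (hr : 1 ≤ r) : cfc f (r • A) ≤ r • cfc f A := by
  have hr₀ : 0 < r := zero_lt_one.trans_le hr
  have r_inv_le : r⁻¹ ≤ 1 := inv_le_one_of_one_le₀ hr
  have cfc_zero_nonneg : 0 ≤ (1 - r⁻¹) • cfc f (0 : Matrix k k ℂ) :=
    smul_nonneg (sub_nonneg.2 r_inv_le) (cfc_nonneg fun x hx ↦
      hf.2.1 x (spectrum_nonneg_of_nonneg le_rfl hx))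
  have concave := hf.concaveOn_cfc.2 (smul_nonneg hr₀.le hA) Set.self_mem_Ici
    (inv_nonneg.2 hr₀.le) (sub_nonneg.2 r_inv_le) (add_sub_cancel r⁻¹ 1)
  rw [smul_zero, add_zero, inv_smul_smul₀ hr₀.ne'] at concave
  exact (inv_smul_le_iff_of_pos hr₀).1 ((le_add_of_nonneg_right cfc_zero_nonneg).trans concave)

end OpMonotone

lemma half_add_le_mul_harmonic {s t x : ℝ} (hs : 0 < s) (h1 : 1 ≤ √(s * t)) (hsx : s ≤ x)
    (hxt : x ≤ t) :
    2⁻¹ * (√(s * t) + x) ≤ ((√s + √t) / 2) ^ 2 * (2⁻¹ * (1 + x⁻¹))⁻¹ := by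
  have hx : 0 < x := hs.trans_le hsx
  have ht : 0 < t := hx.trans_le hxt
  have key : (√(s * t) + x) * (1 + x) ≤ (√s + √t) ^ 2 * x := by
    have hst_sq : √(s * t) ^ 2 = s * t := Real.sq_sqrt (by positivity)
    have sq_add : (√s + √t) ^ 2 = s + t + 2 * √(s * t) := by
      rw [add_sq, Real.sq_sqrt hs.le, Real.sq_sqrt ht.le, Real.sqrt_mul hs.le]
      ring
    have := mul_nonneg (sub_nonneg.2 hsx) (sub_nonneg.2 hxt)
    have := mul_nonneg (sub_nonneg.2 h1) (add_nonneg (Real.sqrt_nonneg (s * t)) hx.le)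
    rw [sq_add]
    linarith
  have harmonic_eq : (2⁻¹ * (1 + x⁻¹))⁻¹ = 2 * x / (1 + x) := by
    field_simp
    ring
  rw [harmonic_eq, ← mul_div_assoc, le_div_iff₀ (by positivity)]
  linarith

lemma one_le_sq_half_sqrt_add_sqrt {s t : ℝ} (hs : 0 ≤ s) (h1 : 1 ≤ √(s * t)) :
    1 ≤ ((√s + √t) / 2) ^ 2 := by
  rw [Real.sqrt_mul hs] at h1
  nlinarith [sq_nonneg (√s - √t)]

section HarmonicMean

variable {n : Type} [Fintype n] [DecidableEq n]

lemma hmean_nonneg {A B : Matrix n n ℂ} (hA : 0 ≤ A) (hB : 0 ≤ B) : 0 ≤ hmean A B :=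
  (smul_nonneg (by norm_num : (0 : ℝ) ≤ 2⁻¹)
    (add_nonneg hA.posSemidef.inv.nonneg hB.posSemidef.inv.nonneg)).posSemidef.inv.nonneg

lemma hmean_mul_mul {S T : Matrix n n ℂ} (hS : IsUnit S) (hT : IsUnit T) (A B : Matrix n n ℂ) :
    hmean (S * A * T) (S * B * T) = S * hmean A B * T := by
  have factor : (2 : ℝ)⁻¹ • ((S * A * T)⁻¹ + (S * B * T)⁻¹) =
      T⁻¹ * ((2 : ℝ)⁻¹ • (A⁻¹ + B⁻¹)) * S⁻¹ := by
    simp only [Matrix.mul_inv_rev, Matrix.mul_smul, Matrix.smul_mul, Matrix.mul_add,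
      Matrix.add_mul, Matrix.mul_assoc]
  rw [hmean, factor, Matrix.mul_inv_rev, Matrix.mul_inv_rev,
    nonsing_inv_nonsing_inv S ((isUnit_iff_isUnit_det S).1 hS),
    nonsing_inv_nonsing_inv T ((isUnit_iff_isUnit_det T).1 hT), hmean, Matrix.mul_assoc]

lemma hmean_one_left {C : Matrix n n ℂ} (hC : C.PosDef) :
    hmean 1 C = cfc (fun x : ℝ ↦ (2⁻¹ * (1 + x⁻¹))⁻¹) C := by
  have hC_sa : IsSelfAdjoint C := hC.isHermitian
  have spectrum_pos : ∀ x ∈ spectrum ℝ C, 0 < x := fun x hx ↦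
    hC.isStrictlyPositive.spectrum_pos hx
  have cont (g : ℝ → ℝ) : ContinuousOn g (spectrum ℝ C) := C.finite_real_spectrum.continuousOn g
  have inv_eq : C⁻¹ = cfc (fun x : ℝ ↦ x⁻¹) C := by
    rw [nonsing_inv_eq_ringInverse, cfc_ringInverse_id C hC.isUnit]
  rw [cfc_inv (fun x : ℝ ↦ 2⁻¹ * (1 + x⁻¹)) C
      (fun x hx ↦ by have := spectrum_pos x hx; positivity) (cont _),
    cfc_const_mul _ _ C (cont _), cfc_const_add _ _ C (cont _), ← inv_eq, map_one,
    ← nonsing_inv_eq_ringInverse, hmean, inv_one]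

lemma amean_one_le_smul_hmean_one {C : Matrix n n ℂ} {s t : ℝ} (hs : 0 < s)
    (h1 : 1 ≤ √(s * t)) (hsC : s • 1 ≤ C) (hCt : C ≤ t • 1) :
    amean (√(s * t) • 1) C ≤ ((√s + √t) / 2) ^ 2 • hmean 1 C := by
  have hC : C.PosDef := by
    simpa using (PosDef.one.smul hs).add_posSemidef (Matrix.le_iff.1 hsC)
  have hC_sa : IsSelfAdjoint C := hC.isHermitian
  have cont (g : ℝ → ℝ) : ContinuousOn g (spectrum ℝ C) := C.finite_real_spectrum.continuousOn g
  rw [← Algebra.algebraMap_eq_smul_one] at hsC hCt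
  have amean_eq : amean (√(s * t) • 1) C = cfc (fun x : ℝ ↦ 2⁻¹ * (√(s * t) + x)) C := by
    rw [cfc_const_mul _ _ C (cont _), cfc_const_add _ _ C (cont _), cfc_id' ℝ C,
      Algebra.algebraMap_eq_smul_one, amean]
  rw [amean_eq, hmean_one_left hC, ← cfc_const_mul _ _ C (cont _)]
  exact cfc_mono (fun x hx ↦ half_add_le_mul_harmonic hs h1
    ((algebraMap_le_iff_le_spectrum hC_sa).1 hsC x hx)
    ((le_algebraMap_iff_spectrum_le hC_sa).1 hCt x hx))
    (cont _) (cont _)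

lemma amean_smul_le_smul_hmean {A B : Matrix n n ℂ} (hA : A.PosDef) {s t : ℝ} (hs : 0 < s)
    (h1 : 1 ≤ √(s * t)) (hsA : s • A ≤ B) (htA : B ≤ t • A) :
    amean (√(s * t) • A) B ≤ ((√s + √t) / 2) ^ 2 • hmean A B := by
  obtain ⟨S, hS, rfl⟩ :=
    CStarAlgebra.isStrictlyPositive_iff_eq_star_mul_self.1 hA.isStrictlyPositive
  have hS_star : IsUnit (star S) := hS.star
  have S_mul_inv : S * S⁻¹ = 1 := mul_nonsing_inv S ((isUnit_iff_isUnit_det S).1 hS)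
  have star_inv_mul : star S⁻¹ * star S = 1 := by rw [← star_mul, S_mul_inv, star_one]
  have star_mul_inv : star S * star S⁻¹ = 1 := mul_eq_one_comm.1 star_inv_mul
  set C := star S⁻¹ * B * S⁻¹ with hC
  have conj_C : star S * C * S = B := by
    calc star S * C * S = (star S * star S⁻¹) * B * (S⁻¹ * S) := by simp only [hC, mul_assoc]
      _ = B := by rw [star_mul_inv, mul_eq_one_comm.1 S_mul_inv, one_mul, mul_one]
  have conj_smul (r : ℝ) : star S⁻¹ * (r • (star S * S)) * S⁻¹ = r • 1 := by
    rw [mul_smul_comm, smul_mul_assoc, ← mul_assoc, star_inv_mul, one_mul, S_mul_inv]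
  have hsC : s • 1 ≤ C := conj_smul s ▸ star_left_conjugate_le_conjugate hsA S⁻¹
  have hCt : C ≤ t • 1 := conj_smul t ▸ star_left_conjugate_le_conjugate htA S⁻¹
  have conj := star_left_conjugate_le_conjugate (amean_one_le_smul_hmean_one hs h1 hsC hCt) S
  have hmean_eq : hmean (star S * S) B = star S * hmean 1 C * S := by
    rw [← hmean_mul_mul hS_star hS, mul_one, conj_C]
  have amean_eq : amean (√(s * t) • (star S * S)) B = star S * amean (√(s * t) • 1) C * S := by
    simp only [amean, mul_smul_comm, smul_mul_assoc, mul_add, add_mul, mul_one, conj_C]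
  rwa [hmean_eq, amean_eq, ← smul_mul_assoc, ← mul_smul_comm]

end HarmonicMean

lemma OpMonotone.amean_cfc_smul_le_smul_cfc_hmean {n : Type} [Fintype n] [DecidableEq n]
    {f : ℝ → ℝ} (hf : OpMonotone f) {A B : Matrix n n ℂ} (hA : A.PosDef) {s t : ℝ} (hs : 0 < s)
    (h1 : 1 ≤ √(s * t)) (hsA : s • A ≤ B) (htA : B ≤ t • A) :
    amean (cfc f (√(s * t) • A)) (cfc f B) ≤ ((√s + √t) / 2) ^ 2 • cfc f (hmean A B) := by
  have hA₀ : 0 ≤ A := hA.posSemidef.nonneg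
  have hB₀ : 0 ≤ B := (smul_nonneg hs.le hA₀).trans hsA
  have hcA₀ : 0 ≤ √(s * t) • A := smul_nonneg (Real.sqrt_nonneg _) hA₀
  have amean_nonneg : 0 ≤ amean (√(s * t) • A) B :=
    smul_nonneg (by norm_num : (0 : ℝ) ≤ 2⁻¹) (add_nonneg hcA₀ hB₀)
  calc amean (cfc f (√(s * t) • A)) (cfc f B)
      ≤ cfc f (amean (√(s * t) • A) B) := hf.amean_cfc_le_cfc_amean hcA₀ hB₀
    _ ≤ cfc f (((√s + √t) / 2) ^ 2 • hmean A B) :=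
        hf.cfc_le_cfc amean_nonneg (amean_smul_le_smul_hmean hA hs h1 hsA htA)
    _ ≤ ((√s + √t) / 2) ^ 2 • cfc f (hmean A B) :=
        hf.cfc_smul_le_smul_cfc (hmean_nonneg hA₀ hB₀) (one_le_sq_half_sqrt_add_sqrt hs.le h1)

end Loewner

theorem diaz_metcalf_sqrt_st_ge_one {n m : Type} [Fintype n] [DecidableEq n] [Fintype m] [DecidableEq m]
    (Φ : Matrix n n ℂ →ₗ[ℂ] Matrix m m ℂ)
    (hΦ : ∀ X : Matrix n n ℂ, X.PosSemidef → (Φ X).PosSemidef)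
    (f : ℝ → ℝ) (hf : OpMonotone f)
    (A B : Matrix n n ℂ) (hA : A.PosDef) (hB : B.PosDef)
    (s t : ℝ) (hs : 0 < s) (hst : s ≤ t) (h1 : 1 ≤ Real.sqrt (s * t))
    (hsA : LoewnerLE (s • A) B) (htA : LoewnerLE B (t • A)) :
    LoewnerLE ((2 : ℝ)⁻¹ • (Φ (cfc f (Real.sqrt (s * t) • A)) + Φ (cfc f B)))
      ((((Real.sqrt s + Real.sqrt t) / 2) ^ 2) • Φ (cfc f (hmean A B))) := by

  have key := hf.amean_cfc_smul_le_smul_cfc_hmean hA hs h1 hsA htA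
  simpa only [LoewnerLE, amean, map_sub, map_add, LinearMap.map_smul_of_tower] using
    hΦ _ (Matrix.le_iff.1 key)
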